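/- Let condition B hold and let v_ε → ∞ as ε → 0. Then condition G: f_ε → f₀ ∈ (0, ∞) as ε → 0 is necessary and sufficient for the convergence in distribution of κ_ε(1) = Σ_{n=1}^{[v_ε]} f_{ε,η_{ε,n−1}} (for some family of initial distributions in the necessity statement, for any family in the sufficiency statement) to a nonnegative random variable whose distribution is not concentrated at zero; in that case the limiting random variable equals the constant f₀, and for every T > 0 and δ > 0, P(sup_{0≤t≤T} |κ_ε(t) − f₀t| > δ) → 0 as ε → 0. -/

import Mathlib

open MeasureTheory Filter Set
open scoped Topology ENNReal

noncomputable section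

/-- Condition B: there exists a ring chain of states `c 0, c 1, …, c N = c 0`
containing all states of the phase space, with
`liminf_{ε→0+} p ε (c (k-1)) (c k) > 0` for `k = 1, …, N`. -/
def CondB {m : ℕ} (p : ℝ → Fin m → Fin m → ℝ) : Prop :=
  ∃ N : ℕ, 0 < N ∧ ∃ c : ℕ → Fin m, c N = c 0 ∧
    (∀ i : Fin m, ∃ k ≤ N, c k = i) ∧
    ∀ k < N, 0 < Filter.liminf (fun ε => p ε (c k) (c (k + 1))) (𝓝[>] (0 : ℝ))

/-- `π` is a stationary distribution of the transition matrix `p`. -/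
def IsStationaryDist {m : ℕ} (p : Fin m → Fin m → ℝ) (π : Fin m → ℝ) : Prop :=
  (∀ i, 0 ≤ π i) ∧ (∑ i, π i = 1) ∧ ∀ j, π j = ∑ i, π i * p i j

/-- The deterministic-reward step-sum process `κ_ε(t) = Σ_{n=1}^{[t v_ε]} f_{ε,η_{ε,n−1}}`. -/
def fStep {m : ℕ} {Ω : Type} (η : ℝ → ℕ → Ω → Fin m) (f : ℝ → Fin m → ℝ)
    (v : ℝ → ℝ) (ε t : ℝ) (ω : Ω) : ℝ :=
  ∑ n ∈ Finset.Icc 1 (Nat.floor (t * v ε)), f ε (η ε (n - 1) ω)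

/-- `f_ε = v_ε Σ_i π_{ε,i} f_{ε,i}`. -/
def fBar {m : ℕ} (π : ℝ → Fin m → ℝ) (f : ℝ → Fin m → ℝ) (v : ℝ → ℝ) (ε : ℝ) : ℝ :=
  v ε * ∑ i, π ε i * f ε i

/-!
Write `P` for the transition matrix and `F = π ⬝ᵥ f` for the stationary mean of a nonnegative reward
`f`. The ring condition bounds the stationary probabilities from below, so `f ≤ C F`, and it bounds
the oscillation of the solution `h` of the Poisson equation `h - P h = f - F` by `C F`, with `C`
independent of `ε`. Along the chain, the sum of `f - F` is a sum of orthogonal martingale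
differences up to a boundary term, all of size `C F`. Hence `κ_ε(t)` approximates `t f_ε` in `L²`
with an error of order `v_ε ^ (-1 / 2)` *relative to* `f_ε`, whatever the size of `f_ε`, and
`E exp(-s κ_ε(1)) - exp(-s f_ε) → 0` without any assumption on `f_ε`. Both directions thereby reduce
to the convergence of the numbers `exp(-s f_ε)`: a limit of these for `s = 1` yields the limit of
`f_ε`, and the values of the limiting transform at `s = 1` and `s = 2` show that `exp(-x)` has zero
variance under the limit law. Uniform convergence in probability follows from the convergence at
fixed times because `κ_ε` is monotone in `t`.
-/

section StochasticMatrix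

open Matrix

lemma mul_le_mul_apply {l m n : Type*} [Fintype m] {A : Matrix l m ℝ} {B : Matrix m n ℝ}
    (hA : ∀ i j, 0 ≤ A i j) (hB : ∀ j k, 0 ≤ B j k) (i : l) (j : m) (k : n) :
    A i j * B j k ≤ (A * B) i k :=
  Finset.single_le_sum (f := fun j => A i j * B j k)
    (fun j _ => mul_nonneg (hA i j) (hB j k)) (Finset.mem_univ j)

variable {ι : Type*} [Fintype ι] [DecidableEq ι] {P : Matrix ι ι ℝ} {L : ℕ} {b : ℝ}

/-- Quantitative irreducibility of a transition matrix `P`: from every state, every state is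
occupied with probability at least `b` at some time that is at most `L` (the time may depend on the
two states, so periodic chains are allowed). -/
def ReachesWithin (P : Matrix ι ι ℝ) (L : ℕ) (b : ℝ) : Prop :=
  ∀ i j, ∃ n ≤ L, b ≤ (P ^ n) i j

lemma pow_le_pow_apply_of_path (hP : ∀ i j, 0 ≤ P i j) {c : ℕ → ι} {a : ℝ} (ha : 0 ≤ a) {k n : ℕ}
    (hstep : ∀ d < n, a ≤ P (c (k + d)) (c (k + d + 1))) :
    a ^ n ≤ (P ^ n) (c k) (c (k + n)) := by
  induction n with
  | zero => simp
  | succ n ih =>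
    calc a ^ (n + 1) = a ^ n * a := pow_succ a n
      _ ≤ (P ^ n) (c k) (c (k + n)) * P (c (k + n)) (c (k + n + 1)) :=
        mul_le_mul (ih fun d hd => hstep d (hd.trans n.lt_succ_self)) (hstep n n.lt_succ_self) ha
          (pow_apply_nonneg hP n _ _)
      _ ≤ (P ^ (n + 1)) (c k) (c (k + (n + 1))) := by
        rw [pow_succ]
        exact mul_le_mul_apply (pow_apply_nonneg hP n) hP _ _ _

lemma reachesWithin_of_ring (hP : ∀ i j, 0 ≤ P i j) {c : ℕ → ι} {N : ℕ} (hc : c N = c 0)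
    (hcover : ∀ i, ∃ k ≤ N, c k = i) {a : ℝ} (ha : 0 ≤ a) (ha1 : a ≤ 1)
    (hstep : ∀ k < N, a ≤ P (c k) (c (k + 1))) : ReachesWithin P N (a ^ N) := by
  have harc : ∀ k n, k + n ≤ N → a ^ n ≤ (P ^ n) (c k) (c (k + n)) := fun k n hkn =>
    pow_le_pow_apply_of_path hP ha fun d _ => hstep (k + d) (by omega)
  intro i j
  obtain ⟨k, hk, rfl⟩ := hcover i
  obtain ⟨l, hl, rfl⟩ := hcover j
  rcases le_or_gt k l with hkl | hlk
  · have h := harc k (l - k) (by omega)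
    rw [Nat.add_sub_of_le hkl] at h
    exact ⟨l - k, by omega, (pow_le_pow_of_le_one ha ha1 (by omega)).trans h⟩
  · have h₁ := harc k (N - k) (by omega)
    have h₂ := harc 0 l (by omega)
    rw [Nat.add_sub_of_le hk, hc] at h₁
    rw [zero_add] at h₂
    refine ⟨N - k + l, by omega, ?_⟩
    calc a ^ N ≤ a ^ (N - k + l) := pow_le_pow_of_le_one ha ha1 (by omega)
      _ = a ^ (N - k) * a ^ l := pow_add _ _ _
      _ ≤ (P ^ (N - k)) (c k) (c 0) * (P ^ l) (c 0) (c l) :=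
        mul_le_mul h₁ h₂ (pow_nonneg ha l) (pow_apply_nonneg hP _ _ _)
      _ ≤ (P ^ (N - k + l)) (c k) (c l) := by
        rw [pow_add]
        exact mul_le_mul_apply (pow_apply_nonneg hP _) (pow_apply_nonneg hP _) _ _ _

lemma vecMul_pow_of_vecMul_eq {π : ι → ℝ} (hπP : π ᵥ* P = π) (n : ℕ) : π ᵥ* P ^ n = π := by
  induction n with
  | zero => simp
  | succ n ih => rw [pow_succ, ← vecMul_vecMul, ih, hπP]

lemma ReachesWithin.le_card_mul_stationary (hr : ReachesWithin P L b) (hP : ∀ i j, 0 ≤ P i j)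
    {π : ι → ℝ} (hπ : π ∈ stdSimplex ℝ ι) (hπP : π ᵥ* P = π) (j : ι) :
    b ≤ Fintype.card ι * π j := by
  have hle : ∀ i, π i * b ≤ π j := fun i => by
    obtain ⟨n, -, hn⟩ := hr i j
    calc π i * b ≤ π i * (P ^ n) i j := mul_le_mul_of_nonneg_left hn (hπ.1 i)
      _ ≤ (π ᵥ* P ^ n) j := Finset.single_le_sum (f := fun i => π i * (P ^ n) i j)
        (fun i _ => mul_nonneg (hπ.1 i) (pow_apply_nonneg hP n i j)) (Finset.mem_univ i)
      _ = π j := by rw [vecMul_pow_of_vecMul_eq hπP]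
  calc b = ∑ i, π i * b := by rw [← Finset.sum_mul, hπ.2, one_mul]
    _ ≤ ∑ _i : ι, π j := Finset.sum_le_sum fun i _ => hle i
    _ = Fintype.card ι * π j := by rw [Finset.sum_const, Finset.card_univ, nsmul_eq_mul]

lemma ReachesWithin.abs_sub_dotProduct_le (hr : ReachesWithin P L b) (hb : 0 < b)
    (hP : ∀ i j, 0 ≤ P i j) {π : ι → ℝ} (hπ : π ∈ stdSimplex ℝ ι) (hπP : π ᵥ* P = π)
    {f : ι → ℝ} (hf : ∀ i, 0 ≤ f i) (j : ι) :
    |f j - π ⬝ᵥ f| ≤ Fintype.card ι / b * π ⬝ᵥ f := by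
  have hterm : ∀ i, 0 ≤ π i * f i := fun i => mul_nonneg (hπ.1 i) (hf i)
  have hmean : 0 ≤ π ⬝ᵥ f := Finset.sum_nonneg fun i _ => hterm i
  have hlower := hr.le_card_mul_stationary hP hπ hπP j
  have hone : 1 ≤ Fintype.card ι / b := by
    rw [one_le_div hb]
    exact hlower.trans
      (mul_le_of_le_one_right (Nat.cast_nonneg _) ((mem_Icc_of_mem_stdSimplex hπ j).2))
  have hfj : f j ≤ Fintype.card ι / b * π ⬝ᵥ f := by
    rw [div_mul_eq_mul_div, le_div_iff₀ hb]
    calc f j * b ≤ f j * (Fintype.card ι * π j) := mul_le_mul_of_nonneg_left hlower (hf j)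
      _ = Fintype.card ι * (π j * f j) := by ring
      _ ≤ Fintype.card ι * π ⬝ᵥ f := mul_le_mul_of_nonneg_left
        (Finset.single_le_sum (f := fun i => π i * f i) (fun i _ => hterm i) (Finset.mem_univ j))
        (Nat.cast_nonneg _)
  have hmean_le := le_mul_of_one_le_left hmean hone
  exact abs_le.2 ⟨by linarith [hf j], by linarith⟩

lemma le_pow_mulVec_add (hP : P ∈ rowStochastic ℝ ι) {h : ι → ℝ} {δ : ℝ}
    (hδ : ∀ i, h i ≤ (P *ᵥ h) i + δ) (n : ℕ) (i : ι) : h i ≤ (P ^ n *ᵥ h) i + n * δ := by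
  induction n generalizing i with
  | zero => simp
  | succ n ih =>
    have hmono : (P *ᵥ h) i ≤ (P *ᵥ (P ^ n *ᵥ h + (n * δ) • 1)) i :=
      dotProduct_le_dotProduct_of_nonneg_left (fun j => by simpa using ih j) (hP.1 i)
    have heval : (P *ᵥ (P ^ n *ᵥ h + (n * δ) • 1)) i = (P ^ (n + 1) *ᵥ h) i + n * δ := by
      rw [mulVec_add, mulVec_smul, hP.2, mulVec_mulVec, ← pow_succ']
      simp
    push_cast
    linarith [hδ i]

-- The idea is to compare the maximal value of `h` with the average of `h` after `n` steps.
lemma ReachesWithin.mul_sub_le (hr : ReachesWithin P L b) (hb : 0 ≤ b)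
    (hP : P ∈ rowStochastic ℝ ι) {h : ι → ℝ} {δ : ℝ} (hδ0 : 0 ≤ δ)
    (hδ : ∀ i, h i ≤ (P *ᵥ h) i + δ) (i j : ι) : b * (h i - h j) ≤ L * δ := by
  have : Nonempty ι := ⟨i⟩
  obtain ⟨m, hm⟩ := Finite.exists_max h
  obtain ⟨n, hnL, hn⟩ := hr m j
  have hPn : P ^ n ∈ rowStochastic ℝ ι := pow_mem hP n
  calc b * (h i - h j) ≤ b * (h m - h j) := by gcongr; exact hm i
    _ ≤ (P ^ n) m j * (h m - h j) := mul_le_mul_of_nonneg_right hn (sub_nonneg.2 (hm j))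
    _ ≤ ∑ k, (P ^ n) m k * (h m - h k) :=
      Finset.single_le_sum (f := fun k => (P ^ n) m k * (h m - h k))
        (fun k _ => mul_nonneg (hPn.1 m k) (sub_nonneg.2 (hm k))) (Finset.mem_univ j)
    _ = h m - (P ^ n *ᵥ h) m := by
      simp only [mul_sub, Finset.sum_sub_distrib, ← Finset.sum_mul,
        sum_row_of_mem_rowStochastic hPn, one_mul, mulVec, dotProduct]
    _ ≤ n * δ := by linarith [le_pow_mulVec_add hP hδ n m]
    _ ≤ L * δ := by gcongr

lemma ReachesWithin.abs_le_of_dotProduct_eq_zero (hr : ReachesWithin P L b) (hb : 0 < b)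
    (hP : P ∈ rowStochastic ℝ ι) {π : ι → ℝ} (hπ : π ∈ stdSimplex ℝ ι) {h : ι → ℝ}
    (hπh : π ⬝ᵥ h = 0) {δ : ℝ} (hδ : ∀ i, |(h - P *ᵥ h) i| ≤ δ) (i : ι) :
    |h i| ≤ L / b * δ := by
  have hosc : ∀ i j, b * (h i - h j) ≤ L * δ :=
    hr.mul_sub_le hb.le hP ((abs_nonneg _).trans (hδ i)) fun k => by
      have := (abs_le.1 (hδ k)).2
      rw [Pi.sub_apply] at this
      linarith
  have hmean : ∑ j, π j * (h i - h j) = h i := by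
    simp only [mul_sub, Finset.sum_sub_distrib, ← Finset.sum_mul, hπ.2, one_mul]
    exact sub_eq_self.2 hπh
  have havg : |∑ j, π j * (h i - h j)| ≤ ∑ j, π j * (L / b * δ) := by
    refine (Finset.abs_sum_le_sum_abs _ _).trans (Finset.sum_le_sum fun j _ => ?_)
    rw [abs_mul, abs_of_nonneg (hπ.1 j)]
    refine mul_le_mul_of_nonneg_left ?_ (hπ.1 j)
    rw [div_mul_eq_mul_div, le_div_iff₀ hb]
    rcases abs_cases (h i - h j) with ⟨habs, -⟩ | ⟨habs, -⟩ <;> rw [habs]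
    · linarith [hosc i j]
    · linarith [hosc j i]
  rwa [hmean, ← Finset.sum_mul, hπ.2, one_mul] at havg

-- `1 - P` is singular, so the rank-one projection on the constants is added to it; the sum is
-- injective, and on vectors of `π`-mean zero it agrees with `1 - P`.
lemma ReachesWithin.exists_sub_mulVec_eq (hr : ReachesWithin P L b) (hb : 0 < b)
    (hP : P ∈ rowStochastic ℝ ι) {π : ι → ℝ} (hπ : π ∈ stdSimplex ℝ ι) (hπP : π ᵥ* P = π)
    {g : ι → ℝ} (hg : π ⬝ᵥ g = 0) {δ : ℝ} (hδ : ∀ i, |g i| ≤ δ) :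
    ∃ h, h - P *ᵥ h = g ∧ ∀ i, |h i| ≤ L / b * δ := by
  set A : Matrix ι ι ℝ := 1 - P + vecMulVec 1 π
  have hA : ∀ h, A *ᵥ h = h - P *ᵥ h + (π ⬝ᵥ h) • 1 := fun h => by
    rw [add_mulVec, sub_mulVec, one_mulVec, vecMulVec_mulVec, op_smul_eq_smul]
  have hπA : ∀ h, π ⬝ᵥ A *ᵥ h = π ⬝ᵥ h := fun h => by
    rw [hA, dotProduct_add, dotProduct_sub, dotProduct_mulVec, hπP, sub_self, zero_add,
      dotProduct_smul, dotProduct_one, hπ.2, smul_eq_mul, mul_one]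
  have hA_of_mean : ∀ h, π ⬝ᵥ A *ᵥ h = 0 → π ⬝ᵥ h = 0 ∧ h - P *ᵥ h = A *ᵥ h := fun h h0 => by
    rw [hπA] at h0
    rw [hA, h0, zero_smul, add_zero]
    exact ⟨rfl, rfl⟩
  have hinj : Function.Injective A.mulVec := by
    refine (injective_iff_map_eq_zero A.mulVecLin).2 fun h (hh : A *ᵥ h = 0) => ?_
    obtain ⟨hmean, hpoisson⟩ := hA_of_mean h (by rw [hh, dotProduct_zero])
    funext i
    have := hr.abs_le_of_dotProduct_eq_zero hb hP hπ hmean (δ := 0)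
      (fun i => by rw [hpoisson, hh]; simp) i
    simpa using this
  obtain ⟨h, rfl⟩ := mulVec_surjective_iff_isUnit.2 (mulVec_injective_iff_isUnit.1 hinj) g
  obtain ⟨hmean, hpoisson⟩ := hA_of_mean h hg
  exact ⟨h, hpoisson, hr.abs_le_of_dotProduct_eq_zero hb hP hπ hmean (by rwa [hpoisson])⟩

lemma abs_mulVec_le (hP : P ∈ rowStochastic ℝ ι) {h : ι → ℝ} {B : ℝ} (hB : ∀ i, |h i| ≤ B)
    (i : ι) : |(P *ᵥ h) i| ≤ B :=
  calc |(P *ᵥ h) i| ≤ ∑ j, |P i j * h j| := Finset.abs_sum_le_sum_abs _ _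
    _ ≤ ∑ j, P i j * B := Finset.sum_le_sum fun j _ => by
      rw [abs_mul, abs_of_nonneg (hP.1 i j)]
      exact mul_le_mul_of_nonneg_left (hB j) (hP.1 i j)
    _ = B := by rw [← Finset.sum_mul, sum_row_of_mem_rowStochastic hP, one_mul]

end StochasticMatrix

section MarkovChain

open Matrix

lemma integral_comp_eq_sum {Ω κ : Type*} [MeasurableSpace Ω] {μ : Measure Ω} [IsFiniteMeasure μ]
    [Fintype κ] [MeasurableSpace κ] [MeasurableSingletonClass κ] {Y : Ω → κ} (hY : Measurable Y)
    (g : κ → ℝ) : ∫ ω, g (Y ω) ∂μ = ∑ y, μ.real (Y ⁻¹' {y}) * g y := by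
  rw [← integral_map hY.aemeasurable (measurable_of_finite g).aestronglyMeasurable,
    integral_fintype .of_finite]
  simp only [map_measureReal_apply hY (measurableSet_singleton _), smul_eq_mul]

lemma memLp_comp_of_finite {Ω κ : Type*} [MeasurableSpace Ω] {μ : Measure Ω} [IsFiniteMeasure μ]
    [Finite κ] [MeasurableSpace κ] [MeasurableSingletonClass κ] {Y : Ω → κ} (hY : Measurable Y)
    (g : κ → ℝ) (r : ℝ≥0∞) : MemLp (fun ω => g (Y ω)) r μ :=
  MemLp.of_discrete.comp_of_map hY.aemeasurable

lemma integral_sq_sum_eq_of_orthogonal {Ω : Type*} [MeasurableSpace Ω] {μ : Measure Ω}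
    {D : ℕ → Ω → ℝ} (hD : ∀ n, MemLp (D n) 2 μ)
    (horth : ∀ n, ∫ ω, (∑ k ∈ Finset.range n, D k ω) * D n ω ∂μ = 0) (n : ℕ) :
    ∫ ω, (∑ k ∈ Finset.range n, D k ω) ^ 2 ∂μ = ∑ k ∈ Finset.range n, ∫ ω, D k ω ^ 2 ∂μ := by
  induction n with
  | zero => simp
  | succ n ih =>
    have hS : MemLp (fun ω => ∑ k ∈ Finset.range n, D k ω) 2 μ := memLp_finsetSum _ fun k _ => hD k
    have hcross : Integrable (fun ω => 2 * ((∑ k ∈ Finset.range n, D k ω) * D n ω)) μ :=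
      (hS.integrable_mul (hD n)).const_mul 2
    have hsq : Integrable (fun ω => (∑ k ∈ Finset.range n, D k ω) ^ 2 +
        2 * ((∑ k ∈ Finset.range n, D k ω) * D n ω)) μ := hS.integrable_sq.add hcross
    simp only [Finset.sum_range_succ, add_sq, mul_assoc]
    rw [integral_add hsq (hD n).integrable_sq, integral_add hS.integrable_sq hcross,
      integral_const_mul, horth, ih, mul_zero, add_zero]

variable {ι Ω : Type*} [MeasurableSpace Ω] {μ : Measure Ω} {X : ℕ → Ω → ι} {P : Matrix ι ι ℝ}

/-- Under `μ`, the process `X` is a homogeneous Markov chain with transition matrix `P`. The Markov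
property is stated without conditioning, as the recursion it gives for the probabilities of the
cylinder sets of paths `I`; the initial distribution is left free. -/
def IsMarkovChain (μ : Measure Ω) (X : ℕ → Ω → ι) (P : Matrix ι ι ℝ) : Prop :=
  ∀ (n : ℕ) (I : ℕ → ι), μ.real {ω | ∀ k ≤ n + 1, X k ω = I k} =
    μ.real {ω | ∀ k ≤ n, X k ω = I k} * P (I n) (I (n + 1))

lemma IsMarkovChain.measureReal_preimage_prodMk (hX : IsMarkovChain μ X P) (n : ℕ)
    (w : Fin (n + 1) → ι) (j : ι) :
    μ.real ((fun ω => ((fun k : Fin (n + 1) => X k ω), X (n + 1) ω)) ⁻¹' {(w, j)}) =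
      μ.real ((fun ω (k : Fin (n + 1)) => X k ω) ⁻¹' {w}) * P (w (Fin.last n)) j := by
  obtain ⟨I, rfl, rfl⟩ : ∃ I : ℕ → ι, (fun k : Fin (n + 1) => I k) = w ∧ I (n + 1) = j :=
    ⟨fun k => if hk : k < n + 1 then w ⟨k, hk⟩ else j, funext fun k => dif_pos k.is_lt, by simp⟩
  convert hX n I using 3
  · ext ω
    simp only [mem_preimage, mem_singleton_iff, Prod.mk.injEq, funext_iff, Fin.forall_iff,
      Set.mem_ofPred_eq, Nat.lt_succ_iff, Nat.le_succ_iff, or_imp, forall_and, forall_eq]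
  · ext ω
    simp only [mem_preimage, mem_singleton_iff, funext_iff, Fin.forall_iff, Set.mem_ofPred_eq,
      Nat.lt_succ_iff]
  · rfl

variable [Fintype ι] [MeasurableSpace ι] [MeasurableSingletonClass ι]

lemma IsMarkovChain.integral_mul_comp_succ [IsFiniteMeasure μ] (hX : IsMarkovChain μ X P)
    (hXm : ∀ n, Measurable (X n)) (h : ι → ℝ) (n : ℕ) (φ : (Fin (n + 1) → ι) → ℝ) :
    ∫ ω, φ (fun k => X k ω) * h (X (n + 1) ω) ∂μ =
      ∫ ω, φ (fun k => X k ω) * (P *ᵥ h) (X n ω) ∂μ := by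
  have hpast : Measurable fun ω (k : Fin (n + 1)) => X k ω := measurable_pi_lambda _ fun k => hXm k
  calc ∫ ω, φ (fun k => X k ω) * h (X (n + 1) ω) ∂μ
      = ∑ w, ∑ j, μ.real ((fun ω (k : Fin (n + 1)) => X k ω) ⁻¹' {w}) * P (w (Fin.last n)) j *
          (φ w * h j) := by
        rw [integral_comp_eq_sum (hpast.prodMk (hXm (n + 1))) fun y => φ y.1 * h y.2,
          Fintype.sum_prod_type]
        simp only [hX.measureReal_preimage_prodMk]
    _ = ∑ w, μ.real ((fun ω (k : Fin (n + 1)) => X k ω) ⁻¹' {w}) *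
          (φ w * (P *ᵥ h) (w (Fin.last n))) := by
        simp only [mulVec, dotProduct, Finset.mul_sum]
        exact Finset.sum_congr rfl fun w _ => Finset.sum_congr rfl fun j _ => by ring
    _ = ∫ ω, φ (fun k => X k ω) * (P *ᵥ h) (X n ω) ∂μ := by
        rw [← integral_comp_eq_sum hpast fun w => φ w * (P *ᵥ h) (w (Fin.last n))]
        rfl

lemma IsMarkovChain.integral_sum_mul_sub_mulVec_eq_zero [IsFiniteMeasure μ]
    (hX : IsMarkovChain μ X P) (hXm : ∀ n, Measurable (X n)) (h : ι → ℝ) (n : ℕ) :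
    ∫ ω, (∑ k ∈ Finset.range n, (h (X (k + 1) ω) - (P *ᵥ h) (X k ω))) *
      (h (X (n + 1) ω) - (P *ᵥ h) (X n ω)) ∂μ = 0 := by
  have hL2 : ∀ (g : ι → ℝ) k, MemLp (fun ω => g (X k ω)) 2 μ := fun g k =>
    memLp_comp_of_finite (hXm k) g 2
  have hsum : MemLp (fun ω => ∑ k ∈ Finset.range n, (h (X (k + 1) ω) - (P *ᵥ h) (X k ω))) 2 μ :=
    memLp_finsetSum _ fun k _ => (hL2 h (k + 1)).sub (hL2 (P *ᵥ h) k)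
  simp only [mul_sub]
  refine (integral_sub (hsum.integrable_mul (hL2 h (n + 1)))
    (hsum.integrable_mul (hL2 (P *ᵥ h) n))).trans (sub_eq_zero.2 ?_)
  simpa only [Pi.mul_apply, Fin.val_succ, Fin.val_castSucc, Finset.sum_range] using
    hX.integral_mul_comp_succ hXm h n
      fun w => ∑ k : Fin n, (h (w k.succ) - (P *ᵥ h) (w k.castSucc))

variable [DecidableEq ι] [IsProbabilityMeasure μ]

lemma IsMarkovChain.integral_sq_sum_sub_mulVec_le (hX : IsMarkovChain μ X P)
    (hXm : ∀ n, Measurable (X n)) (hP : P ∈ rowStochastic ℝ ι) {h : ι → ℝ} {B : ℝ}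
    (hB : ∀ i, |h i| ≤ B) (n : ℕ) :
    ∫ ω, (∑ k ∈ Finset.range n, (h - P *ᵥ h) (X k ω)) ^ 2 ∂μ ≤ 8 * (n + 1) * B ^ 2 := by
  have hL2 : ∀ (g : ι → ℝ) k, MemLp (fun ω => g (X k ω)) 2 μ := fun g k =>
    memLp_comp_of_finite (hXm k) g 2
  set D : ℕ → Ω → ℝ := fun k ω => h (X (k + 1) ω) - (P *ᵥ h) (X k ω)
  have hD : ∀ k, MemLp (D k) 2 μ := fun k => (hL2 h (k + 1)).sub (hL2 (P *ᵥ h) k)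
  have hDsum : MemLp (fun ω => ∑ k ∈ Finset.range n, D k ω) 2 μ := memLp_finsetSum _ fun k _ => hD k
  have sub_sq_le : ∀ {x y : ℝ}, |x| ≤ B → |y| ≤ B → (x - y) ^ 2 ≤ 4 * B ^ 2 := fun {x y} hx hy => by
    rw [show 4 * B ^ 2 = (B + B) ^ 2 by ring]
    exact sq_le_sq.2 ((abs_sub x y).trans ((add_le_add hx hy).trans (le_abs_self _)))
  have hmart : ∫ ω, (∑ k ∈ Finset.range n, D k ω) ^ 2 ∂μ ≤ n * (4 * B ^ 2) := by
    rw [integral_sq_sum_eq_of_orthogonal hD (hX.integral_sum_mul_sub_mulVec_eq_zero hXm h)]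
    calc ∑ k ∈ Finset.range n, ∫ ω, D k ω ^ 2 ∂μ ≤ ∑ _k ∈ Finset.range n, ∫ _ω, 4 * B ^ 2 ∂μ :=
          Finset.sum_le_sum fun k _ => integral_mono (hD k).integrable_sq (integrable_const _)
            fun ω => sub_sq_le (hB _) (abs_mulVec_le hP hB _)
      _ = n * (4 * B ^ 2) := by simp
  have hdecomp : ∀ ω, ∑ k ∈ Finset.range n, (h - P *ᵥ h) (X k ω) =
      (h (X 0 ω) - h (X n ω)) + ∑ k ∈ Finset.range n, D k ω := fun ω => by
    rw [← Finset.sum_range_sub' (fun k => h (X k ω)), ← Finset.sum_add_distrib]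
    exact Finset.sum_congr rfl fun k _ => by rw [Pi.sub_apply]; ring
  calc ∫ ω, (∑ k ∈ Finset.range n, (h - P *ᵥ h) (X k ω)) ^ 2 ∂μ
      ≤ ∫ ω, (2 * (4 * B ^ 2) + 2 * (∑ k ∈ Finset.range n, D k ω) ^ 2) ∂μ := by
        refine integral_mono (memLp_finsetSum _ fun k _ => hL2 _ k).integrable_sq
          ((integrable_const _).add (hDsum.integrable_sq.const_mul 2)) fun ω => ?_
        simp only [hdecomp]
        linarith [add_sq_le (a := h (X 0 ω) - h (X n ω)) (b := ∑ k ∈ Finset.range n, D k ω),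
          sub_sq_le (hB (X 0 ω)) (hB (X n ω))]
    _ = 2 * (4 * B ^ 2) + 2 * ∫ ω, (∑ k ∈ Finset.range n, D k ω) ^ 2 ∂μ := by
        rw [integral_add (integrable_const _) (hDsum.integrable_sq.const_mul 2)]
        simp [integral_const_mul]
    _ ≤ 8 * (n + 1) * B ^ 2 := by linarith

lemma IsMarkovChain.integral_sq_sum_sub_le (hX : IsMarkovChain μ X P) (hXm : ∀ n, Measurable (X n))
    (hP : P ∈ rowStochastic ℝ ι) {L : ℕ} {b : ℝ} (hr : ReachesWithin P L b) (hb : 0 < b)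
    {π : ι → ℝ} (hπ : π ∈ stdSimplex ℝ ι) (hπP : π ᵥ* P = π) {f : ι → ℝ} (hf : ∀ i, 0 ≤ f i)
    (n : ℕ) :
    ∫ ω, (∑ k ∈ Finset.range n, f (X k ω) - n * π ⬝ᵥ f) ^ 2 ∂μ ≤
      8 * (n + 1) * (L / b * (Fintype.card ι / b * π ⬝ᵥ f)) ^ 2 := by
  have hcenter : π ⬝ᵥ (fun i => f i - π ⬝ᵥ f) = 0 := by
    simp only [dotProduct, mul_sub, Finset.sum_sub_distrib, ← Finset.sum_mul, hπ.2, one_mul,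
      sub_self]
  obtain ⟨h, hpoisson, hbound⟩ := hr.exists_sub_mulVec_eq hb hP hπ hπP hcenter
    (hr.abs_sub_dotProduct_le hb hP.1 hπ hπP hf)
  simpa only [hpoisson, Finset.sum_sub_distrib, Finset.sum_const, Finset.card_range,
    nsmul_eq_mul] using hX.integral_sq_sum_sub_mulVec_le hXm hP hbound n

lemma IsMarkovChain.integral_sq_sum_floor_sub_le (hX : IsMarkovChain μ X P)
    (hXm : ∀ n, Measurable (X n)) (hP : P ∈ rowStochastic ℝ ι) {L : ℕ} {b : ℝ}
    (hr : ReachesWithin P L b) (hb : 0 < b) {π : ι → ℝ} (hπ : π ∈ stdSimplex ℝ ι)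
    (hπP : π ᵥ* P = π) {f : ι → ℝ} (hf : ∀ i, 0 ≤ f i) {v t : ℝ} (hv : 1 ≤ v) (ht : 0 ≤ t) :
    ∫ ω, (∑ k ∈ Finset.range ⌊t * v⌋₊, f (X k ω) - t * (v * π ⬝ᵥ f)) ^ 2 ∂μ ≤
      (16 * (L / b * (Fintype.card ι / b)) ^ 2 + 2) * (t + 1) / v * (v * π ⬝ᵥ f) ^ 2 := by
  set n := ⌊t * v⌋₊
  set S : Ω → ℝ := fun ω => ∑ k ∈ Finset.range n, f (X k ω)
  set F := π ⬝ᵥ f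
  set C := L / b * (Fintype.card ι / b)
  have hn : (n : ℝ) ≤ t * v := Nat.floor_le (by positivity)
  have hround : (n - t * v) ^ 2 * F ^ 2 ≤ F ^ 2 :=
    mul_le_of_le_one_left (sq_nonneg F) <| (sq_le_one_iff_abs_le_one _).2 <|
      abs_le.2 ⟨by linarith [Nat.lt_floor_add_one (t * v)], by linarith⟩
  have hS : MemLp (fun ω => S ω - n * F) 2 μ :=
    (memLp_finsetSum _ fun k _ => memLp_comp_of_finite (hXm k) f 2).sub (memLp_const _)
  have hS' : MemLp (fun ω => S ω - t * (v * F)) 2 μ :=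
    (memLp_finsetSum _ fun k _ => memLp_comp_of_finite (hXm k) f 2).sub (memLp_const _)
  calc ∫ ω, (S ω - t * (v * F)) ^ 2 ∂μ ≤ ∫ ω, (2 * (S ω - n * F) ^ 2 + 2 * F ^ 2) ∂μ := by
        refine integral_mono hS'.integrable_sq
          ((hS.integrable_sq.const_mul 2).add (integrable_const _)) fun ω => ?_
        have hsplit := add_sq_le (a := S ω - n * F) (b := (n - t * v) * F)
        rw [show S ω - n * F + (n - t * v) * F = S ω - t * (v * F) by ring, mul_pow] at hsplit
        linarith
    _ = 2 * ∫ ω, (S ω - n * F) ^ 2 ∂μ + 2 * F ^ 2 := by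
        rw [integral_add (hS.integrable_sq.const_mul 2) (integrable_const _), integral_const_mul]
        simp
    _ ≤ 2 * (8 * (n + 1) * (L / b * (Fintype.card ι / b * F)) ^ 2) + 2 * F ^ 2 := by
        gcongr
        exact hX.integral_sq_sum_sub_le hXm hP hr hb hπ hπP hf n
    _ = (16 * C ^ 2 * (n + 1) + 2) * F ^ 2 := by ring
    _ ≤ (16 * C ^ 2 * ((t + 1) * v) + 2 * ((t + 1) * v)) * F ^ 2 := by
        gcongr
        · linarith
        · nlinarith
    _ = (16 * C ^ 2 + 2) * (t + 1) / v * (v * F) ^ 2 := by field_simp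

end MarkovChain

section MarkovFamily

open Matrix

variable {ι Ω : Type*} [MeasurableSpace Ω] {X : ℕ → Ω → ι} {Ps : ι → Measure Ω} {p : ι → ι → ℝ}

/-- The law of `X` under `Ps i` is that of the Markov chain started at `i` with transition
probabilities `p`, expressed on cylinder sets. The sign of `p` is not prescribed: `ENNReal.ofReal`
sends negative numbers to `0`. -/
def IsMarkovFamily (Ps : ι → Measure Ω) (X : ℕ → Ω → ι) (p : ι → ι → ℝ) : Prop :=
  ∀ (n : ℕ) (I : ℕ → ι), Ps (I 0) {ω | ∀ k ≤ n, X k ω = I k} =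
    ENNReal.ofReal (∏ k ∈ Finset.Icc 1 n, p (I (k - 1)) (I k))

/-- The transition matrix of a Markov family with transition probabilities `p`. Taking positive
parts makes it a stochastic matrix even if `p` has negative entries, which an `IsMarkovFamily`
cannot tell from `0`. -/
def transitionMatrix (p : ι → ι → ℝ) : Matrix ι ι ℝ := .of fun i j => (p i j)⁺

lemma transitionMatrix_nonneg (p : ι → ι → ℝ) (i j : ι) : 0 ≤ transitionMatrix p i j :=
  posPart_nonneg _

lemma le_transitionMatrix (p : ι → ι → ℝ) (i j : ι) : p i j ≤ transitionMatrix p i j :=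
  le_posPart _

lemma IsMarkovFamily.measure_ne_start (hPs : IsMarkovFamily Ps X p)
    [MeasurableSpace ι] [MeasurableSingletonClass ι] [∀ i, IsProbabilityMeasure (Ps i)]
    (hX : Measurable (X 0)) (i : ι) : Ps i {ω | X 0 ω ≠ i} = 0 := by
  refine (prob_compl_eq_zero_iff (hX (measurableSet_singleton i))).2 ?_
  change Ps i {ω | X 0 ω = i} = 1
  simpa using hPs 0 fun _ => i

lemma IsMarkovFamily.isMarkovChain (hPs : IsMarkovFamily Ps X p)
    [MeasurableSpace ι] [MeasurableSingletonClass ι] [∀ i, IsProbabilityMeasure (Ps i)]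
    (hX : Measurable (X 0)) (i : ι) : IsMarkovChain (Ps i) X (transitionMatrix p) := by
  intro n I
  have hsub : {ω | ∀ k ≤ n + 1, X k ω = I k} ⊆ {ω | ∀ k ≤ n, X k ω = I k} :=
    fun ω hω k hk => hω k (hk.trans n.le_succ)
  have of_null : Ps i {ω | ∀ k ≤ n, X k ω = I k} = 0 →
      (Ps i).real {ω | ∀ k ≤ n + 1, X k ω = I k} =
        (Ps i).real {ω | ∀ k ≤ n, X k ω = I k} * transitionMatrix p (I n) (I (n + 1)) :=
    fun h => by simp [Measure.real, h, measure_mono_null hsub h]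
  rcases eq_or_ne (I 0) i with rfl | hi
  · rcases le_total (∏ k ∈ Finset.Icc 1 n, p (I (k - 1)) (I k)) 0 with hneg | hpos
    · exact of_null (by rw [hPs, ENNReal.ofReal_of_nonpos hneg])
    · rw [Measure.real, Measure.real, hPs, hPs, Finset.prod_Icc_succ_top (by omega),
        ENNReal.ofReal_mul hpos, ENNReal.toReal_mul, add_tsub_cancel_right,
        ENNReal.toReal_ofReal' (r := p _ _)]
      rfl
  · exact of_null <| measure_mono_null (fun ω hω h0 => hi ((hω 0 n.zero_le).symm.trans h0))
      (hPs.measure_ne_start hX i)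

lemma IsMarkovFamily.measureReal_preimage_one (hPs : IsMarkovFamily Ps X p)
    [MeasurableSpace ι] [MeasurableSingletonClass ι] [∀ i, IsProbabilityMeasure (Ps i)]
    (hX : Measurable (X 0)) (i j : ι) : (Ps i).real (X 1 ⁻¹' {j}) = transitionMatrix p i j := by
  have hae : X 1 ⁻¹' {j} =ᵐ[Ps i] {ω | ∀ k ≤ 1, X k ω = if k = 0 then i else j} := by
    filter_upwards [measure_eq_zero_iff_ae_notMem.1 (hPs.measure_ne_start hX i)] with ω hω
    have h0 : X 0 ω = i := by simpa using hω
    change (X 1 ω = j) = ∀ k ≤ 1, X k ω = if k = 0 then i else j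
    refine propext ⟨fun h k hk => ?_, fun h => by simpa using h 1 le_rfl⟩
    interval_cases k
    · simpa using h0
    · simpa using h
  have hlaw := hPs 1 fun k => if k = 0 then i else j
  rw [if_pos rfl, ← measure_congr hae] at hlaw
  simp [Measure.real, hlaw, transitionMatrix, ENNReal.toReal_ofReal', posPart_def]

variable [Fintype ι]

lemma IsMarkovFamily.transitionMatrix_mem_rowStochastic [DecidableEq ι]
    (hPs : IsMarkovFamily Ps X p) [MeasurableSpace ι] [MeasurableSingletonClass ι]
    [∀ i, IsProbabilityMeasure (Ps i)] (hX : ∀ n, Measurable (X n)) :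
    transitionMatrix p ∈ rowStochastic ℝ ι := by
  refine mem_rowStochastic_iff_sum.2 ⟨transitionMatrix_nonneg p, fun i => ?_⟩
  simp only [← hPs.measureReal_preimage_one (hX 0) i]
  rw [sum_measureReal_preimage_singleton _ fun j _ => hX 1 (measurableSet_singleton j)]
  simp

lemma measureReal_sum_ofReal_smul [∀ i, IsFiniteMeasure (Ps i)] {q : ι → ℝ} (hq : ∀ i, 0 ≤ q i)
    (s : Set Ω) : (∑ i, ENNReal.ofReal (q i) • Ps i).real s = ∑ i, q i * (Ps i).real s := by
  simp only [Measure.real, Measure.finsetSum_apply, Measure.smul_apply, smul_eq_mul]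
  rw [ENNReal.toReal_sum fun i _ =>
    ENNReal.mul_ne_top ENNReal.ofReal_ne_top (measure_ne_top _ _)]
  simp only [ENNReal.toReal_mul, ENNReal.toReal_ofReal (hq _)]

lemma isProbabilityMeasure_sum_ofReal_smul [∀ i, IsProbabilityMeasure (Ps i)] {q : ι → ℝ}
    (hq : q ∈ stdSimplex ℝ ι) : IsProbabilityMeasure (∑ i, ENNReal.ofReal (q i) • Ps i) := by
  constructor
  simp [Measure.finsetSum_apply, ← ENNReal.ofReal_sum_of_nonneg fun i _ => hq.1 i, hq.2]

lemma IsMarkovChain.sum_ofReal_smul [∀ i, IsFiniteMeasure (Ps i)] {P : Matrix ι ι ℝ}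
    (hX : ∀ i, IsMarkovChain (Ps i) X P) {q : ι → ℝ} (hq : ∀ i, 0 ≤ q i) :
    IsMarkovChain (∑ i, ENNReal.ofReal (q i) • Ps i) X P := fun n I => by
  simp only [measureReal_sum_ofReal_smul hq, hX _ n I, Finset.sum_mul, mul_assoc]

lemma vecMul_transitionMatrix_eq [DecidableEq ι] (hp : transitionMatrix p ∈ rowStochastic ℝ ι)
    {π : ι → ℝ} (hπ : ∀ i, 0 ≤ π i) (hstat : ∀ j, π j = ∑ i, π i * p i j) :
    π ᵥ* transitionMatrix p = π := by
  have hle : ∀ j ∈ Finset.univ, π j ≤ (π ᵥ* transitionMatrix p) j := fun j _ => by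
    conv_lhs => rw [hstat j]
    exact Finset.sum_le_sum fun i _ => mul_le_mul_of_nonneg_left (le_transitionMatrix p i j) (hπ i)
  have htotal : ∑ j, π j = ∑ j, (π ᵥ* transitionMatrix p) j := by
    simp only [vecMul, dotProduct]
    rw [Finset.sum_comm]
    simp only [← Finset.mul_sum, sum_row_of_mem_rowStochastic hp, mul_one]
  exact funext fun j => ((Finset.sum_eq_sum_iff_of_le hle).1 htotal j (Finset.mem_univ j)).symm

end MarkovFamily

section LaplaceTransform

open ProbabilityTheory

lemma abs_exp_neg_sub_exp_neg_mul_le {a b : ℝ} (ha : 0 ≤ a) (hb : 0 ≤ b) :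
    |Real.exp (-a) - Real.exp (-b)| * b ≤ |a - b| := by
  have hfactor : ∀ x y : ℝ, Real.exp (-x) - Real.exp (-y) =
      Real.exp (-x) * (1 - Real.exp (-(y - x))) := fun x y => by
    rw [mul_sub, ← Real.exp_add]
    ring_nf
  have exp_neg_mul_add_one_le : ∀ x : ℝ, Real.exp (-x) * (x + 1) ≤ 1 := fun x => by
    rw [Real.exp_neg, inv_mul_le_one₀ (Real.exp_pos x)]
    exact Real.add_one_le_exp x
  rcases le_total b a with hab | hab
  · rw [abs_sub_comm, abs_of_nonneg (sub_nonneg.2 (Real.exp_le_exp.2 (neg_le_neg hab))),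
      abs_of_nonneg (sub_nonneg.2 hab), hfactor]
    calc Real.exp (-b) * (1 - Real.exp (-(a - b))) * b ≤ Real.exp (-b) * (a - b) * b := by
          gcongr Real.exp (-b) * ?_ * b
          linarith [Real.one_sub_le_exp_neg (a - b)]
      _ ≤ (a - b) * (Real.exp (-b) * (b + 1)) := by
          nlinarith [mul_nonneg (Real.exp_pos (-b)).le (sub_nonneg.2 hab)]
      _ ≤ a - b := mul_le_of_le_one_right (sub_nonneg.2 hab) (exp_neg_mul_add_one_le b)
  · rw [abs_of_nonneg (sub_nonneg.2 (Real.exp_le_exp.2 (neg_le_neg hab))), abs_sub_comm,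
      abs_of_nonneg (sub_nonneg.2 hab), hfactor]
    have hgap : (1 - Real.exp (-(b - a))) * b ≤ (b - a) * (a + 1) := by
      nlinarith [Real.one_sub_le_exp_neg (b - a), Real.exp_pos (-(b - a))]
    calc Real.exp (-a) * (1 - Real.exp (-(b - a))) * b ≤
          Real.exp (-a) * ((b - a) * (a + 1)) := by rw [mul_assoc]; gcongr
      _ = (b - a) * (Real.exp (-a) * (a + 1)) := by ring
      _ ≤ b - a := mul_le_of_le_one_right (sub_nonneg.2 hab) (exp_neg_mul_add_one_le a)

variable {Ω : Type*} [MeasurableSpace Ω]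

lemma sq_integral_le_integral_sq {μ : Measure Ω} [IsProbabilityMeasure μ] {G : Ω → ℝ}
    (hG : MemLp G 2 μ) : (∫ ω, G ω ∂μ) ^ 2 ≤ ∫ ω, G ω ^ 2 ∂μ := by
  have hvar := variance_nonneg G μ
  rw [variance_eq_sub hG] at hvar
  exact sub_nonneg.1 hvar

lemma memLp_exp_neg_mul {μ : Measure Ω} [IsFiniteMeasure μ] {Y : Ω → ℝ}
    (hY : AEStronglyMeasurable Y μ) (hY0 : ∀ ω, 0 ≤ Y ω) {s : ℝ} (hs : 0 ≤ s) (r : ℝ≥0∞) :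
    MemLp (fun ω => Real.exp (-(s * Y ω))) r μ := by
  refine MemLp.of_bound (Real.continuous_exp.comp_aestronglyMeasurable (hY.const_mul s).neg) 1
    (.of_forall fun ω => ?_)
  rw [Real.norm_of_nonneg (Real.exp_pos _).le, Real.exp_le_one_iff, neg_nonpos]
  exact mul_nonneg hs (hY0 ω)

-- The hypothesis bounds the error relative to `F`, the conclusion is uniform in `F`: where `F` is
-- large, both exponentials are small.
lemma sq_integral_exp_neg_sub_exp_neg_le {μ : Measure Ω} [IsProbabilityMeasure μ] {Y : Ω → ℝ}
    (hY : MemLp Y 2 μ) (hY0 : ∀ ω, 0 ≤ Y ω) {F r s : ℝ} (hF : 0 ≤ F) (hr : 0 ≤ r) (hs : 0 < s)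
    (hYF : ∫ ω, (Y ω - F) ^ 2 ∂μ ≤ r * F ^ 2) :
    (∫ ω, Real.exp (-(s * Y ω)) ∂μ - Real.exp (-(s * F))) ^ 2 ≤ r := by
  rcases hF.eq_or_lt with rfl | hFpos
  · have hY_eq : Y =ᵐ[μ] 0 := by
      have hsq : ∫ ω, Y ω ^ 2 ∂μ = 0 := le_antisymm (by simpa using hYF)
        (integral_nonneg fun ω => sq_nonneg _)
      filter_upwards [(integral_eq_zero_iff_of_nonneg (fun ω => sq_nonneg _) hY.integrable_sq).1
        hsq] with ω hω
      exact pow_eq_zero_iff two_ne_zero |>.1 hω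
    have hexp : ∫ ω, Real.exp (-(s * Y ω)) ∂μ = 1 := by
      rw [integral_congr_ae (g := fun _ => 1) (hY_eq.mono fun ω hω => by simp [hω])]
      simp
    simpa [hexp] using hr
  · have hexp := memLp_exp_neg_mul (μ := μ) hY.aestronglyMeasurable hY0 hs.le 2
    set G : Ω → ℝ := fun ω => Real.exp (-(s * Y ω)) - Real.exp (-(s * F))
    have hG : MemLp G 2 μ := hexp.sub (memLp_const _)
    have hpointwise : ∀ ω, G ω ^ 2 * F ^ 2 ≤ (Y ω - F) ^ 2 := fun ω => by
      have h := abs_exp_neg_sub_exp_neg_mul_le (mul_nonneg hs.le (hY0 ω)) (mul_nonneg hs.le hF)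
      rw [← mul_sub, abs_mul, abs_of_pos hs, mul_left_comm] at h
      rw [← mul_pow, sq_le_sq, abs_mul, abs_of_pos hFpos]
      exact le_of_mul_le_mul_left h hs
    calc (∫ ω, Real.exp (-(s * Y ω)) ∂μ - Real.exp (-(s * F))) ^ 2 = (∫ ω, G ω ∂μ) ^ 2 := by
          rw [integral_sub (hexp.integrable one_le_two) (integrable_const _)]
          simp
      _ ≤ ∫ ω, G ω ^ 2 ∂μ := sq_integral_le_integral_sq hG
      _ ≤ r := by
          refine le_of_mul_le_mul_right (le_trans ?_ hYF) (pow_pos hFpos 2)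
          rw [← integral_mul_const]
          exact integral_mono (hG.integrable_sq.mul_const _)
            (hY.sub (memLp_const F)).integrable_sq hpointwise

lemma tendsto_integral_exp_neg_sub_exp_neg {α : Type*} {l : Filter α} {μ : α → Measure Ω}
    (hμ : ∀ᶠ a in l, IsProbabilityMeasure (μ a)) {Y : α → Ω → ℝ}
    (hY : ∀ᶠ a in l, MemLp (Y a) 2 (μ a)) (hY0 : ∀ᶠ a in l, ∀ ω, 0 ≤ Y a ω) {F r : α → ℝ}
    (hF : ∀ᶠ a in l, 0 ≤ F a) (hr0 : ∀ᶠ a in l, 0 ≤ r a) (hr : Tendsto r l (𝓝 0))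
    (hYF : ∀ᶠ a in l, ∫ ω, (Y a ω - F a) ^ 2 ∂(μ a) ≤ r a * F a ^ 2) {s : ℝ} (hs : 0 < s) :
    Tendsto (fun a => ∫ ω, Real.exp (-(s * Y a ω)) ∂(μ a) - Real.exp (-(s * F a))) l (𝓝 0) := by
  have hsqrt : Tendsto (fun a => √(r a)) l (𝓝 0) := by simpa using hr.sqrt
  refine squeeze_zero_norm' ?_ hsqrt
  filter_upwards [hμ, hY, hY0, hF, hr0, hYF] with a _ hYa hY0a hFa hra hYFa
  exact Real.abs_le_sqrt (sq_integral_exp_neg_sub_exp_neg_le hYa hY0a hFa hra hs hYFa)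

lemma eq_dirac_of_integral_exp_neg {μ : Measure ℝ} [IsProbabilityMeasure μ] {c : ℝ}
    (h1 : ∫ x, Real.exp (-x) ∂μ = Real.exp (-c))
    (h2 : ∫ x, Real.exp (-(2 * x)) ∂μ = Real.exp (-(2 * c))) : μ = Measure.dirac c := by
  have hsq : ∀ x : ℝ, Real.exp (-(2 * x)) = Real.exp (-x) ^ 2 := fun x => by
    rw [← Real.exp_nat_mul]
    ring_nf
  have hmemLp : MemLp (fun x : ℝ => Real.exp (-x)) 2 μ := by
    rw [memLp_two_iff_integrable_sq (by fun_prop)]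
    simp only [← hsq]
    exact .of_integral_ne_zero (h2 ▸ (Real.exp_pos _).ne')
  have hvar : variance (fun x : ℝ => Real.exp (-x)) μ = 0 := by
    rw [variance_eq_sub hmemLp, h1, sub_eq_zero, ← hsq, ← h2]
    exact integral_congr_ae (.of_forall fun x => (hsq x).symm)
  have hconst : (fun x : ℝ => x) =ᵐ[μ] fun _ => c := by
    filter_upwards [ae_eq_integral_of_variance_eq_zero hmemLp hvar] with x hx
    rw [h1, Real.exp_eq_exp] at hx
    exact neg_injective hx
  simpa only [Measure.map_id', Measure.map_const, measure_univ, one_smul] using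
    Measure.map_congr hconst

lemma integrable_exp_neg_of_measure_Iio {μ : Measure ℝ} [IsFiniteMeasure μ] (hμ : μ (Iio 0) = 0) :
    Integrable (fun x => Real.exp (-x)) μ := by
  refine .of_bound (by fun_prop) 1 ?_
  filter_upwards [measure_eq_zero_iff_ae_notMem.1 hμ] with x hx
  rw [Real.norm_eq_abs, Real.abs_exp, Real.exp_le_one_iff, neg_nonpos]
  exact not_lt.1 hx

lemma exists_tendsto_eq_dirac {α : Type*} {l : Filter α} [l.NeBot] {F : α → ℝ} {μ : Measure ℝ}
    [IsProbabilityMeasure μ] (hμ : Integrable (fun x => Real.exp (-x)) μ)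
    (hlim : ∀ s > 0, Tendsto (fun a => Real.exp (-(s * F a))) l
      (𝓝 (∫ x, Real.exp (-(s * x)) ∂μ))) :
    ∃ c, Tendsto F l (𝓝 c) ∧ μ = Measure.dirac c := by
  set m := ∫ x, Real.exp (-x) ∂μ
  have hm : 0 < m := integral_exp_pos hμ
  have hF : Tendsto F l (𝓝 (-Real.log m)) := by
    have h := ((hlim 1 one_pos).log (by simpa using hm.ne')).neg
    simpa using h
  refine ⟨-Real.log m, hF, eq_dirac_of_integral_exp_neg ?_ ?_⟩
  · rw [neg_neg, Real.exp_log hm]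
  · exact tendsto_nhds_unique (hlim 2 two_pos)
      ((Real.continuous_exp.tendsto _).comp (hF.const_mul 2).neg)

lemma pos_of_dirac {c : ℝ} (hIio : Measure.dirac c (Iio 0) = 0)
    (hzero : Measure.dirac c {0} < 1) : 0 < c := by
  have hc : 0 ≤ c := by
    by_contra! h
    simp [h] at hIio
  refine hc.lt_of_ne' ?_
  rintro rfl
  simp at hzero

end LaplaceTransform

section ConvergenceInProbability

variable {α Ω : Type*} {l : Filter α} [MeasurableSpace Ω]

lemma measureReal_le_abs_sub_le {μ : Measure Ω} [IsFiniteMeasure μ] {Y : Ω → ℝ} (hY : MemLp Y 2 μ)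
    (m : ℝ) {δ : ℝ} (hδ : 0 < δ) :
    μ.real {ω | δ ≤ |Y ω - m|} ≤ (∫ ω, (Y ω - m) ^ 2 ∂μ) / δ ^ 2 := by
  have hset : {ω | δ ≤ |Y ω - m|} = {ω | δ ^ 2 ≤ (Y ω - m) ^ 2} := by
    ext ω
    rw [Set.mem_ofPred_eq, Set.mem_ofPred_eq, sq_le_sq, abs_of_pos hδ]
  rw [hset, le_div_iff₀' (pow_pos hδ 2)]
  exact mul_meas_ge_le_integral_of_nonneg (.of_forall fun ω => sq_nonneg _)
    (hY.sub (memLp_const m)).integrable_sq _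

lemma tendsto_measureReal_le_abs_sub {μ : α → Measure Ω} (hμ : ∀ᶠ a in l, IsFiniteMeasure (μ a))
    {Y : α → Ω → ℝ} (hY : ∀ᶠ a in l, MemLp (Y a) 2 (μ a)) {m : α → ℝ} {c : ℝ}
    (hm : Tendsto m l (𝓝 c)) (hYm : Tendsto (fun a => ∫ ω, (Y a ω - m a) ^ 2 ∂(μ a)) l (𝓝 0))
    {δ : ℝ} (hδ : 0 < δ) : Tendsto (fun a => (μ a).real {ω | δ ≤ |Y a ω - c|}) l (𝓝 0) := by
  have hbound : Tendsto (fun a => (∫ ω, (Y a ω - m a) ^ 2 ∂(μ a)) / (δ / 2) ^ 2) l (𝓝 0) := by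
    simpa using hYm.div_const ((δ / 2) ^ 2)
  have hclose : ∀ᶠ a in l, |m a - c| < δ / 2 := hm.eventually (Metric.ball_mem_nhds c (half_pos hδ))
  refine squeeze_zero' (.of_forall fun a => measureReal_nonneg) ?_ hbound
  filter_upwards [hμ, hY, hclose] with a _ hYa ha
  refine le_trans (measureReal_mono fun ω (hω : δ ≤ |Y a ω - c|) => ?_)
    (measureReal_le_abs_sub_le hYa (m a) (half_pos hδ))
  change δ / 2 ≤ |Y a ω - m a|
  linarith [abs_sub_le (Y a ω) (m a) c]

lemma exists_Icc_mem_nhdsWithin_abs_sub_lt {g : ℝ → ℝ} {A B : ℝ} (hg : ContinuousOn g (Icc A B))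
    {x : ℝ} (hx : x ∈ Icc A B) {δ : ℝ} (hδ : 0 < δ) :
    ∃ u w, Icc u w ∈ 𝓝[Icc A B] x ∧ u ∈ Icc A B ∧ w ∈ Icc A B ∧
      ∀ s ∈ Icc u w, ∀ t ∈ Icc u w, |g s - g t| < δ := by
  obtain ⟨η, hη, hgη⟩ := Metric.continuousOn_iff.1 hg x hx (δ / 2) (half_pos hδ)
  have hInter : Icc ((x - η / 2) ⊔ A) ((x + η / 2) ⊓ B) =
      Icc (x - η / 2) (x + η / 2) ∩ Icc A B := Icc_inter_Icc.symm
  have hnear : ∀ t ∈ Icc ((x - η / 2) ⊔ A) ((x + η / 2) ⊓ B), |g t - g x| < δ / 2 := fun t ht => by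
    rw [hInter] at ht
    exact hgη t ht.2 (abs_lt.2 ⟨by linarith [ht.1.1], by linarith [ht.1.2]⟩)
  refine ⟨(x - η / 2) ⊔ A, (x + η / 2) ⊓ B, ?_,
    ⟨le_sup_right, sup_le (by linarith [hx.2]) (hx.1.trans hx.2)⟩,
    ⟨le_inf (by linarith [hx.1]) (hx.1.trans hx.2), inf_le_right⟩, fun s hs t ht => ?_⟩
  · rw [hInter]
    exact inter_mem (mem_nhdsWithin_of_mem_nhds (Icc_mem_nhds (by linarith) (by linarith)))
      self_mem_nhdsWithin
  · linarith [abs_sub_le (g s) (g x) (g t), hnear s hs, hnear t ht, abs_sub_comm (g x) (g t)]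

lemma le_abs_sub_or_le_abs_sub_of_bracket {Y g : ℝ → ℝ} {u t w δ : ℝ} (hut : Y u ≤ Y t)
    (htw : Y t ≤ Y w) (hgu : |g t - g u| < δ / 2) (hgw : |g t - g w| < δ / 2)
    (hδ : δ < |Y t - g t|) : δ / 2 ≤ |Y u - g u| ∨ δ / 2 ≤ |Y w - g w| := by
  rw [abs_lt] at hgu hgw
  rcases lt_abs.1 hδ with h | h
  · exact .inr (le_abs.2 (.inl (by linarith)))
  · exact .inl (le_abs.2 (.inr (by linarith)))

-- By monotonicity, the error on a short interval is controlled by the errors at its endpoints.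
lemma tendsto_measureReal_exists_lt_abs_sub {μ : α → Measure Ω}
    (hμ : ∀ᶠ a in l, IsFiniteMeasure (μ a)) {Y : α → ℝ → Ω → ℝ} {g : ℝ → ℝ} {A B : ℝ}
    (hY : ∀ᶠ a in l, ∀ ω, MonotoneOn (fun t => Y a t ω) (Icc A B))
    (hg : ContinuousOn g (Icc A B)) (hYg : ∀ t ∈ Icc A B, ∀ δ > 0,
      Tendsto (fun a => (μ a).real {ω | δ ≤ |Y a t ω - g t|}) l (𝓝 0)) {δ : ℝ} (hδ : 0 < δ) :
    Tendsto (fun a => (μ a).real {ω | ∃ t ∈ Icc A B, δ < |Y a t ω - g t|}) l (𝓝 0) := by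
  refine isCompact_Icc.induction_on (s := Icc A B) (p := fun S => Tendsto (fun a =>
    (μ a).real {ω | ∃ t ∈ S, δ < |Y a t ω - g t|}) l (𝓝 0))
    (by simpa using tendsto_const_nhds) ?_ ?_ fun x hx => ?_
  · refine fun S S' hSS' h => squeeze_zero' (.of_forall fun a => measureReal_nonneg) ?_ h
    filter_upwards [hμ] with a _
    exact measureReal_mono fun ω ⟨t, ht, hω⟩ => ⟨t, hSS' ht, hω⟩
  · intro S S' h h'
    refine squeeze_zero (fun a => measureReal_nonneg) (fun a => ?_) (by simpa using h.add h')
    simp only [mem_union, or_and_right, exists_or, ofPred_or]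
    exact measureReal_union_le _ _
  · obtain ⟨u, w, hnhds, hu, hw, hosc⟩ := exists_Icc_mem_nhdsWithin_abs_sub_lt hg hx (half_pos hδ)
    refine ⟨_, hnhds, squeeze_zero' (.of_forall fun a => measureReal_nonneg) ?_
      (by simpa using (hYg u hu _ (half_pos hδ)).add (hYg w hw _ (half_pos hδ)))⟩
    filter_upwards [hμ, hY] with a _ hYa
    refine (measureReal_mono ?_).trans (measureReal_union_le _ _)
    rintro ω ⟨t, ht, hω⟩
    have htI : t ∈ Icc A B := ⟨hu.1.trans ht.1, ht.2.trans hw.2⟩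
    have huw := ht.1.trans ht.2
    exact le_abs_sub_or_le_abs_sub_of_bracket (Y := fun t => Y a t ω) (g := g)
      (hYa ω hu htI ht.1) (hYa ω htI hw ht.2)
      (hosc t ht u (left_mem_Icc.2 huw)) (hosc t ht w (right_mem_Icc.2 huw)) hω

end ConvergenceInProbability

section Accumulation

lemma exists_pos_eventually_le_of_liminf_pos {α : Type*} {l : Filter α} {u : α → ℝ}
    (h : 0 < liminf u l) : ∃ b > 0, ∀ᶠ x in l, b ≤ u x := by
  rw [liminf_eq] at h
  -- A real `liminf` of a function with no eventual lower bound is `sSup ∅ = 0`.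
  have hne : {a | ∀ᶠ x in l, a ≤ u x}.Nonempty := by
    by_contra hempty
    rw [not_nonempty_iff_eq_empty.1 hempty, Real.sSup_empty] at h
    exact lt_irrefl 0 h
  obtain ⟨b, hb, hb0⟩ := exists_lt_of_lt_csSup hne h
  exact ⟨b, hb0, hb⟩

variable {m : ℕ}

lemma CondB.exists_eventually_reachesWithin {p : ℝ → Fin m → Fin m → ℝ} (hB : CondB p) :
    ∃ (L : ℕ) (b : ℝ), 0 < b ∧ ∀ᶠ ε in 𝓝[>] 0, ReachesWithin (transitionMatrix (p ε)) L b := by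
  obtain ⟨N, -, c, hc, hcover, hliminf⟩ := hB
  choose! b hb hbp using fun k hk => exists_pos_eventually_le_of_liminf_pos (hliminf k hk)
  obtain ⟨a, ha, hab⟩ := Finset.exists_between' {0} (insert 1 ((Finset.range N).image b))
    (by simpa using hb)
  simp only [Finset.mem_singleton, forall_eq, Finset.forall_mem_insert, Finset.forall_mem_image,
    Finset.mem_range] at ha hab
  refine ⟨N, a ^ N, pow_pos ha N, ?_⟩
  have hstep : ∀ᶠ ε in 𝓝[>] 0, ∀ k ∈ Finset.range N, b k ≤ p ε (c k) (c (k + 1)) :=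
    (eventually_all_finset _).2 fun k hk => hbp k (Finset.mem_range.1 hk)
  filter_upwards [hstep] with ε hε
  exact reachesWithin_of_ring (transitionMatrix_nonneg _) hc hcover ha.le hab.1.le fun k hk => calc
      a ≤ b k := (hab.2 hk).le
      _ ≤ p ε (c k) (c (k + 1)) := hε k (Finset.mem_range.2 hk)
      _ ≤ transitionMatrix (p ε) (c k) (c (k + 1)) := le_transitionMatrix _ _ _

variable {Ω : Type} {η : ℝ → ℕ → Ω → Fin m} {f : ℝ → Fin m → ℝ} {v : ℝ → ℝ} {ε : ℝ}

lemma fStep_eq_sum_range (t : ℝ) (ω : Ω) :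
    fStep η f v ε t ω = ∑ k ∈ Finset.range ⌊t * v ε⌋₊, f ε (η ε k ω) := by
  rw [Finset.range_eq_Ico]
  exact (Finset.sum_Ico_add' (fun n => f ε (η ε (n - 1) ω)) 0 ⌊t * v ε⌋₊ 1).symm

lemma fStep_nonneg (hf : ∀ i, 0 ≤ f ε i) (t : ℝ) (ω : Ω) : 0 ≤ fStep η f v ε t ω :=
  Finset.sum_nonneg fun _ _ => hf _

lemma monotone_fStep (hf : ∀ i, 0 ≤ f ε i) (hv : 0 ≤ v ε) (ω : Ω) :
    Monotone fun t => fStep η f v ε t ω := fun _ _ hst =>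
  Finset.sum_le_sum_of_subset_of_nonneg (Finset.Icc_subset_Icc_right
    (Nat.floor_mono (mul_le_mul_of_nonneg_right hst hv))) fun _ _ _ => hf _

lemma fBar_nonneg {π : ℝ → Fin m → ℝ} (hπ : ∀ i, 0 ≤ π ε i) (hf : ∀ i, 0 ≤ f ε i) (hv : 0 ≤ v ε) :
    0 ≤ fBar π f v ε :=
  mul_nonneg hv (Finset.sum_nonneg fun i _ => mul_nonneg (hπ i) (hf i))

variable [MeasurableSpace Ω]

lemma memLp_fStep {μ : Measure Ω} [IsFiniteMeasure μ] (hη : ∀ n, Measurable (η ε n)) (t : ℝ)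
    (r : ℝ≥0∞) : MemLp (fStep η f v ε t) r μ :=
  memLp_finsetSum _ fun n _ => memLp_comp_of_finite (hη (n - 1)) (f ε) r

lemma integral_sq_fStep_sub_le {μ : Measure Ω} [IsProbabilityMeasure μ]
    {p : Fin m → Fin m → ℝ} {L : ℕ} {b : ℝ} {π : ℝ → Fin m → ℝ}
    (hη : ∀ n, Measurable (η ε n)) (hμ : IsMarkovChain μ (η ε) (transitionMatrix p))
    (hp : transitionMatrix p ∈ Matrix.rowStochastic ℝ (Fin m))
    (hr : ReachesWithin (transitionMatrix p) L b) (hb : 0 < b) (hπ : IsStationaryDist p (π ε))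
    (hf : ∀ i, 0 ≤ f ε i) (hv : 1 ≤ v ε) {t : ℝ} (ht : 0 ≤ t) :
    ∫ ω, (fStep η f v ε t ω - t * fBar π f v ε) ^ 2 ∂μ ≤
      (16 * (L / b * (m / b)) ^ 2 + 2) * (t + 1) / v ε * fBar π f v ε ^ 2 := by
  have hbound :=
    hμ.integral_sq_sum_floor_sub_le hη hp hr hb ⟨hπ.1, hπ.2.1⟩
      (vecMul_transitionMatrix_eq hp hπ.1 hπ.2.2) hf hv ht
  rw [Fintype.card_fin] at hbound
  simp only [fStep_eq_sum_range]
  exact hbound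

lemma CondB.exists_eventually_integral_sq_fStep_sub_le {p : ℝ → Fin m → Fin m → ℝ}
    {π : ℝ → Fin m → ℝ} {μ : ℝ → Measure Ω} (hB : CondB p) (hη : ∀ ε n, Measurable (η ε n))
    (hμ : ∀ᶠ ε in 𝓝[>] 0, IsProbabilityMeasure (μ ε))
    (hX : ∀ᶠ ε in 𝓝[>] 0, IsMarkovChain (μ ε) (η ε) (transitionMatrix (p ε)))
    (hp : ∀ᶠ ε in 𝓝[>] 0, transitionMatrix (p ε) ∈ Matrix.rowStochastic ℝ (Fin m))
    (hπ : ∀ᶠ ε in 𝓝[>] 0, IsStationaryDist (p ε) (π ε)) (hf : ∀ᶠ ε in 𝓝[>] 0, ∀ i, 0 ≤ f ε i)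
    (hv : Tendsto v (𝓝[>] 0) atTop) :
    ∃ K, 0 ≤ K ∧ ∀ t ≥ 0, ∀ᶠ ε in 𝓝[>] 0,
      ∫ ω, (fStep η f v ε t ω - t * fBar π f v ε) ^ 2 ∂(μ ε) ≤
        K * (t + 1) / v ε * fBar π f v ε ^ 2 := by
  obtain ⟨L, b, hb, hr⟩ := hB.exists_eventually_reachesWithin
  refine ⟨16 * (L / b * (m / b)) ^ 2 + 2, by positivity, fun t ht => ?_⟩
  filter_upwards [hμ, hX, hp, hr, hπ, hf, hv.eventually_ge_atTop 1] with ε _ hX hp hr hπ hf hv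
  exact integral_sq_fStep_sub_le (hη ε) hX hp hr hb hπ hf hv ht

lemma tendsto_measureReal_exists_lt_abs_fStep_sub {l : Filter ℝ} {π : ℝ → Fin m → ℝ}
    {μ : ℝ → Measure Ω} (hμ : ∀ᶠ ε in l, IsFiniteMeasure (μ ε)) (hη : ∀ ε n, Measurable (η ε n))
    (hf : ∀ᶠ ε in l, ∀ i, 0 ≤ f ε i) (hv : Tendsto v l atTop) {K : ℝ}
    (hbound : ∀ t ≥ 0, ∀ᶠ ε in l, ∫ ω, (fStep η f v ε t ω - t * fBar π f v ε) ^ 2 ∂(μ ε) ≤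
      K * (t + 1) / v ε * fBar π f v ε ^ 2)
    {f₀ : ℝ} (hlim : Tendsto (fBar π f v) l (𝓝 f₀)) (T : ℝ) {δ : ℝ} (hδ : 0 < δ) :
    Tendsto (fun ε => (μ ε).real {ω | ∃ t ∈ Icc 0 T, δ < |fStep η f v ε t ω - f₀ * t|}) l
      (𝓝 0) := by
  refine tendsto_measureReal_exists_lt_abs_sub hμ ?_ (by fun_prop) (fun t ht δ hδ => ?_) hδ
  · filter_upwards [hf, hv.eventually_ge_atTop 0] with ε hfε hvε ω
    exact (monotone_fStep hfε hvε ω).monotoneOn _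
  · have hm : Tendsto (fun ε => t * fBar π f v ε) l (𝓝 (f₀ * t)) := by
      simpa only [mul_comm t] using hlim.mul_const t
    have hvanish : Tendsto (fun ε => K * (t + 1) / v ε * fBar π f v ε ^ 2) l (𝓝 0) := by
      simpa only [zero_mul] using (hv.const_div_atTop (K * (t + 1))).mul (hlim.pow 2)
    exact tendsto_measureReal_le_abs_sub hμ (hμ.mono fun ε _ => memLp_fStep (hη ε) t 2) hm
      (squeeze_zero' (.of_forall fun ε => integral_nonneg fun ω => sq_nonneg _) (hbound t ht.1)
        hvanish) hδ

lemma tendsto_integral_exp_neg_fStep_sub {l : Filter ℝ} {π : ℝ → Fin m → ℝ}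
    {μ : ℝ → Measure Ω} (hμ : ∀ᶠ ε in l, IsProbabilityMeasure (μ ε))
    (hη : ∀ ε n, Measurable (η ε n)) (hπ : ∀ᶠ ε in l, ∀ i, 0 ≤ π ε i)
    (hf : ∀ᶠ ε in l, ∀ i, 0 ≤ f ε i) (hv : Tendsto v l atTop) {K : ℝ} (hK : 0 ≤ K)
    (hbound : ∀ᶠ ε in l, ∫ ω, (fStep η f v ε 1 ω - fBar π f v ε) ^ 2 ∂(μ ε) ≤
      K / v ε * fBar π f v ε ^ 2) {s : ℝ} (hs : 0 < s) :
    Tendsto (fun ε => ∫ ω, Real.exp (-(s * fStep η f v ε 1 ω)) ∂(μ ε) -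
      Real.exp (-(s * fBar π f v ε))) l (𝓝 0) := by
  have hv0 := hv.eventually_ge_atTop 0
  refine tendsto_integral_exp_neg_sub_exp_neg hμ (hμ.mono fun ε _ => memLp_fStep (hη ε) 1 2)
    (hf.mono fun ε hfε => fStep_nonneg hfε 1) ?_ (hv0.mono fun ε hvε => div_nonneg hK hvε)
    (hv.const_div_atTop K) hbound hs
  filter_upwards [hπ, hf, hv0] with ε hπε hfε hvε
  exact fBar_nonneg hπε hfε hvε

end Accumulation

/-- Lemma 5: under condition B, condition G (`f_ε → f₀ ∈ (0,∞)`) is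
necessary and sufficient for convergence in distribution of `κ_ε(1)` to a nonnegative
random variable not concentrated at zero; in that case the limit is the constant `f₀`
and `κ_ε(·)` converges to `f₀ t` uniformly on compacts in probability. -/
theorem stmt12 {m : ℕ} (hm : 0 < m) (ε₀ : ℝ) (hε₀ : 0 < ε₀)
    {Ω : Type} [MeasurableSpace Ω]
    (η : ℝ → ℕ → Ω → Fin m)
    (Pstart : ℝ → Fin m → Measure Ω)
    (hprob : ∀ ε i, IsProbabilityMeasure (Pstart ε i))
    (hmeas : ∀ ε n, Measurable (η ε n))
    (p : ℝ → Fin m → Fin m → ℝ)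
    (hMC : ∀ ε ∈ Ioc (0:ℝ) ε₀, ∀ n : ℕ, ∀ I : ℕ → Fin m,
      Pstart ε (I 0) {ω | ∀ k ≤ n, η ε k ω = I k}
        = ENNReal.ofReal (∏ k ∈ Finset.Icc 1 n, p ε (I (k - 1)) (I k)))
    (hB : CondB p)
    (π : ℝ → Fin m → ℝ)
    (hπ : ∀ᶠ ε in 𝓝[>] (0:ℝ), IsStationaryDist (fun i j => p ε i j) (π ε))
    (q : ℝ → Fin m → ℝ) (Pq : ℝ → Measure Ω)
    (hq : ∀ ε ∈ Ioc (0:ℝ) ε₀, (∀ i, 0 ≤ q ε i) ∧ ∑ i, q ε i = 1)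
    (hmix : ∀ ε ∈ Ioc (0:ℝ) ε₀, Pq ε = ∑ i, ENNReal.ofReal (q ε i) • Pstart ε i)
    (v : ℝ → ℝ) (hvpos : ∀ ε ∈ Ioc (0:ℝ) ε₀, 0 < v ε)
    (hvinf : Tendsto v (𝓝[>] (0:ℝ)) atTop)
    -- nonrandom nonnegative rewards f_{ε,i}
    (f : ℝ → Fin m → ℝ) (hf : ∀ ε ∈ Ioc (0:ℝ) ε₀, ∀ i, 0 ≤ f ε i) :
    -- sufficiency: condition G implies convergence in distribution of κ_ε(1) to the
    -- constant f₀, together with uniform convergence in probability on compacts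
    (∀ f₀ : ℝ, 0 < f₀ → Tendsto (fBar π f v) (𝓝[>] (0:ℝ)) (𝓝 f₀) →
      (∀ s > 0, Tendsto (fun ε => ∫ ω, Real.exp (-(s * fStep η f v ε 1 ω)) ∂(Pq ε))
        (𝓝[>] (0:ℝ)) (𝓝 (Real.exp (-(s * f₀))))) ∧
      (∀ T > (0:ℝ), ∀ δ > (0:ℝ),
        Tendsto (fun ε => (Pq ε {ω | ∃ t, 0 ≤ t ∧ t ≤ T ∧
            δ < |fStep η f v ε t ω - f₀ * t|}).toReal)
          (𝓝[>] (0:ℝ)) (𝓝 0))) ∧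
    -- necessity: convergence in distribution of κ_ε(1) to a nonnegative limit law μ not
    -- concentrated at zero implies condition G, and μ is the unit mass at f₀
    (∀ μ : Measure ℝ, IsProbabilityMeasure μ → μ (Iio 0) = 0 → μ {0} < 1 →
      (∀ s > 0, Tendsto (fun ε => ∫ ω, Real.exp (-(s * fStep η f v ε 1 ω)) ∂(Pq ε))
        (𝓝[>] (0:ℝ)) (𝓝 (∫ x, Real.exp (-(s * x)) ∂μ))) →
      ∃ f₀ : ℝ, 0 < f₀ ∧ Tendsto (fBar π f v) (𝓝[>] (0:ℝ)) (𝓝 f₀) ∧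
        μ = Measure.dirac f₀) := by
  have hfam : ∀ᶠ ε in 𝓝[>] 0, IsProbabilityMeasure (Pq ε) ∧
      IsMarkovChain (Pq ε) (η ε) (transitionMatrix (p ε)) ∧
      transitionMatrix (p ε) ∈ Matrix.rowStochastic ℝ (Fin m) ∧ ∀ i, 0 ≤ f ε i := by
    filter_upwards [Ioc_mem_nhdsGT hε₀] with ε hε
    have hPs : IsMarkovFamily (Pstart ε) (η ε) (p ε) := hMC ε hε
    rw [hmix ε hε]
    exact ⟨isProbabilityMeasure_sum_ofReal_smul (hq ε hε),
      .sum_ofReal_smul (hPs.isMarkovChain (hmeas ε 0)) (hq ε hε).1,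
      hPs.transitionMatrix_mem_rowStochastic (hmeas ε), hf ε hε⟩
  simp only [eventually_and] at hfam
  obtain ⟨hPq, hX, hp, hf⟩ := hfam
  obtain ⟨K, hK, hbound⟩ :=
    hB.exists_eventually_integral_sq_fStep_sub_le hmeas hPq hX hp hπ hf hvinf
  have hdiff := fun s (hs : 0 < s) => tendsto_integral_exp_neg_fStep_sub hPq hmeas
    (hπ.mono fun ε h => h.1) hf hvinf (mul_nonneg hK zero_le_two)
    (by simpa only [one_mul, one_add_one_eq_two] using hbound 1 zero_le_one) hs
  refine ⟨fun f₀ _ hlim => ⟨fun s hs => ?_, fun T _ δ hδ => ?_⟩, fun μ _ hμ0 hμ1 hlap => ?_⟩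
  · simpa using (hdiff s hs).add (hlim.const_mul s).neg.rexp
  · simpa only [measureReal_def, mem_Icc, and_assoc] using
      tendsto_measureReal_exists_lt_abs_fStep_sub (hPq.mono fun _ _ => inferInstance) hmeas hf
        hvinf hbound hlim T hδ
  · obtain ⟨f₀, hlim, rfl⟩ := exists_tendsto_eq_dirac (integrable_exp_neg_of_measure_Iio hμ0)
      fun s hs => by simpa using (hlap s hs).sub (hdiff s hs)
    exact ⟨f₀, pos_of_dirac hμ0 hμ1, hlim, rfl⟩
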